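/- Let m ≥ 2 and let U_1,…,U_t be scattered F_q-subspaces of F_{q^m}^k of dimensions n_1 ≥ … ≥ n_t ≥ 1 whose linear sets are pairwise disjoint and do not cover PG(k−1,q^m), which together span F_{q^m}^k, and let C = C(U_1^{⊥'},…,U_t^{⊥'}) be the geometric dual code with generator matrix (G_1|…|G_t). Then the set of nonzero Hamming weights of the associated Hamming-metric code of C, i.e. the set of values Σ_{i=1}^t (q^{mk−n_i} − q^{mk−n_i − rk(vG_i)})/(q−1) over nonzero v ∈ F_{q^m}^k, equals {δ_max} ∪ {w_1,…,w_t}, where δ_max = Σ_{i=1}^t (q^{mk−n_i} − q^{mk−n_i−m})/(q−1) and w_j = (q^{mk−n_j} − q^{mk−n_j−m+1})/(q−1) + Σ_{i≠j} (q^{mk−n_i} − q^{mk−n_i−m})/(q−1); in particular this set has exactly |{n_1,…,n_t}| + 1 elements. -/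

import Mathlib

/-!
Write `B(x, y) = Tr(∑ⱼ xⱼ yⱼ)`, a nondegenerate symmetric `Fq`-bilinear form on `Fqm^k` whose
orthogonals are the spaces `dualPerp`. For `v ≠ 0` the entries of the `i`-th block of `v G` span
over `Fq` the image `W` of `dualPerp U_i` under `y ↦ ∑ⱼ vⱼ yⱼ`. The orthogonal of `W` for the trace
form of `Fqm` is `{a | a • v ∈ (dualPerp U_i)^⊥ = U_i}`, which has the dimension of `U_i ∩ ⟨v⟩`.
Hence `rk (v G_i) + dim (U_i ∩ ⟨v⟩) = m` (`rk_add_finrank_inf_lineFq`).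

Since the `U_i` are scattered with disjoint linear sets, a point `⟨v⟩` meets either no `U_i`, or
exactly one of them and in dimension one. Both cases occur, because the linear sets do not cover
the space and every `U_i` is nonzero, and they give `δ_max` and the `w_j` respectively. A point
missing every `U_i` also has rank `m ≤ mk - n_i` in each block, so no exponent is truncated; then
`w_j + q^(mk - n_j - m) = δ_max`, so `w_j` differs from `δ_max` and depends on `j` exactly through
`n_j`.
-/

open Module Submodule

/-- The rank over `Fq` of a vector with entries in `Fqm`: the `Fq`-dimension of the
`Fq`-span of its entries. -/
noncomputable def rk (Fq : Type) [Field Fq] {Fqm : Type} [Field Fqm] [Algebra Fq Fqm]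
    {n : ℕ} (v : Fin n → Fqm) : ℕ :=
  Module.finrank Fq (Submodule.span Fq (Set.range v))

/-- The sum-rank weight of a vector `x ∈ ⊕ᵢ Fqm^{nᵢ}`. -/
noncomputable def srw (Fq : Type) [Field Fq] {Fqm : Type} [Field Fqm] [Algebra Fq Fqm]
    {t : ℕ} {n : Fin t → ℕ} (x : (i : Fin t) → Fin (n i) → Fqm) : ℕ :=
  ∑ i, rk Fq (x i)

/-- `G` is a generator matrix of the sum-rank metric code `C`. -/
def IsGenMatrix {Fqm : Type} [Field Fqm] {t k : ℕ} {n : Fin t → ℕ}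
    (C : Submodule Fqm ((i : Fin t) → Fin (n i) → Fqm))
    (G : Fin k → (i : Fin t) → Fin (n i) → Fqm) : Prop :=
  LinearIndependent Fqm G ∧ Submodule.span Fqm (Set.range G) = C

/-- Nondegeneracy: the columns of each block of a generator matrix are
`Fq`-linearly independent. -/
def Nondeg (Fq : Type) [Field Fq] {Fqm : Type} [Field Fqm] [Algebra Fq Fqm] {t k : ℕ}
    {n : Fin t → ℕ} (G : Fin k → (i : Fin t) → Fin (n i) → Fqm) : Prop :=
  ∀ i : Fin t, LinearIndependent Fq (fun j : Fin (n i) => fun r : Fin k => G r i j)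

/-- A sum-rank metric code is minimal if, whenever the (blockwise) sum-rank support of a
codeword `c'` is contained in the support of a codeword `c`, then `c'` is a scalar
multiple of `c`. -/
def IsMinimal (Fq : Type) [Field Fq] {Fqm : Type} [Field Fqm] [Algebra Fq Fqm] {t : ℕ}
    {n : Fin t → ℕ} (C : Submodule Fqm ((i : Fin t) → Fin (n i) → Fqm)) : Prop :=
  ∀ c ∈ C, ∀ c' ∈ C,
    (∀ i, Submodule.span Fq (Set.range (c' i)) ≤ Submodule.span Fq (Set.range (c i))) →
    ∃ a : Fqm, c' = a • c

/-- The dual `U^{⊥'}` of an `Fq`-subspace of `Fqm^k`, with respect to the (fixed)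
nondegenerate reflexive `Fq`-bilinear form `σ'(x,y) = Tr_{Fqm/Fq}(∑ⱼ xⱼ yⱼ)`. -/
noncomputable def dualPerp (Fq : Type) [Field Fq] {Fqm : Type} [Field Fqm] [Algebra Fq Fqm]
    {k : ℕ} (U : Submodule Fq (Fin k → Fqm)) : Submodule Fq (Fin k → Fqm) where
  carrier := {y | ∀ u ∈ U, Algebra.trace Fq Fqm (∑ j, u j * y j) = 0}
  zero_mem' := by intro u hu; simp
  add_mem' := by
    intro y z hy hz u hu
    have h : (∑ j, u j * (y + z) j) = (∑ j, u j * y j) + (∑ j, u j * z j) := by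
      rw [← Finset.sum_add_distrib]
      exact Finset.sum_congr rfl fun j _ => by simp [mul_add]
    rw [h, map_add, hy u hu, hz u hu, add_zero]
  smul_mem' := by
    intro c y hy u hu
    have h : (∑ j, u j * (c • y) j) = c • (∑ j, u j * y j) := by
      rw [Finset.smul_sum]
      exact Finset.sum_congr rfl fun j _ => by simp [Algebra.mul_smul_comm]
    rw [h, map_smul, hy u hu, smul_zero]

/-- The `Fq`-subspace of `Fqm^k` underlying the `Fqm`-line spanned by `v`. -/
def lineFq (Fq : Type) [Field Fq] {Fqm : Type} [Field Fqm] [Algebra Fq Fqm]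
    {k : ℕ} (v : Fin k → Fqm) : Submodule Fq (Fin k → Fqm) :=
  Submodule.restrictScalars Fq (Submodule.span Fqm {v})

/-- An `Fq`-subspace `U` of `Fqm^k` is scattered if every point of the associated linear
set `L_U` has weight one. -/
noncomputable def Scattered (Fq : Type) [Field Fq] {Fqm : Type} [Field Fqm] [Algebra Fq Fqm]
    {k : ℕ} (U : Submodule Fq (Fin k → Fqm)) : Prop :=
  ∀ v : Fin k → Fqm, v ≠ 0 → Module.finrank Fq ↥(U ⊓ lineFq Fq v) ≤ 1

/-- Gaussian binomial coefficient with base `Q`. -/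
def gaussBinom (Q : ℕ) : ℕ → ℕ → ℕ
  | _, 0 => 1
  | 0, _ + 1 => 0
  | a + 1, b + 1 => gaussBinom Q a b + Q ^ (b + 1) * gaussBinom Q a (b + 1)

section Duality

variable {Fq Fqm : Type} [Field Fq] [Field Fqm] [Algebra Fq Fqm]

/-- The `Fq`-bilinear form `(x, y) ↦ Tr (∑ⱼ xⱼ yⱼ)` on `Fqm^k`. -/
noncomputable def dotTrace (Fq Fqm : Type) [Field Fq] [Field Fqm] [Algebra Fq Fqm] (k : ℕ) :
    LinearMap.BilinForm Fq (Fin k → Fqm) :=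
  LinearMap.mk₂ Fq (fun x y => Algebra.trace Fq Fqm (∑ j, x j * y j))
    (by intro x y z; simp [add_mul, Finset.sum_add_distrib])
    (by intro c x y; simp [← Finset.smul_sum])
    (by intro x y z; simp [mul_add, Finset.sum_add_distrib])
    (by intro c x y; simp [← Finset.smul_sum])

lemma dotTrace_apply {k : ℕ} (x y : Fin k → Fqm) :
    dotTrace Fq Fqm k x y = Algebra.trace Fq Fqm (∑ j, x j * y j) := rfl

lemma dotTrace_isSymm (k : ℕ) : LinearMap.IsSymm (dotTrace Fq Fqm k) :=
  ⟨fun x y => by simp [dotTrace_apply, mul_comm]⟩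

lemma dualPerp_eq_orthogonal {k : ℕ} (U : Submodule Fq (Fin k → Fqm)) :
    dualPerp Fq U = (dotTrace Fq Fqm k).orthogonal U := rfl

/-- The space `U ∩ ⟨v⟩` is a copy of the coefficient space `{a | a • v ∈ U}`. -/
lemma finrank_inf_lineFq {k : ℕ} (U : Submodule Fq (Fin k → Fqm)) {v : Fin k → Fqm}
    (hv : v ≠ 0) :
    finrank Fq ↥(U ⊓ lineFq Fq v)
      = finrank Fq ↥(U.comap
          ((LinearMap.toSpanSingleton Fqm (Fin k → Fqm) v).restrictScalars Fq)) := by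
  set f := (LinearMap.toSpanSingleton Fqm (Fin k → Fqm) v).restrictScalars Fq with hf
  have hinj : Function.Injective f := smul_left_injective Fqm hv
  have hrange : LinearMap.range f = lineFq Fq v := by
    ext x
    simp [hf, lineFq, Submodule.mem_span_singleton]
  rw [← hrange, inf_comm, ← Submodule.map_comap_eq]
  exact (Submodule.equivMapOfInjective f hinj _).finrank_eq.symm

variable [Fintype Fq] [Fintype Fqm]

lemma dotTrace_nondegenerate (k : ℕ) : (dotTrace Fq Fqm k).Nondegenerate := by
  refine (dotTrace_isSymm k).isRefl.nondegenerate_iff_separatingLeft.2 ?_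
  intro x hx
  funext j
  refine (traceForm_nondegenerate Fq Fqm).1 (x j) fun a => ?_
  have h := hx (Pi.single j a)
  rw [dotTrace_apply, Finset.sum_eq_single j] at h
  · simpa [Algebra.traceForm_apply] using h
  · intro i _ hi
    simp [Pi.single_eq_of_ne hi]
  · simp

/-- `U` is its own double orthogonal. -/
lemma mem_iff_forall_dualPerp {k : ℕ} (U : Submodule Fq (Fin k → Fqm)) (x : Fin k → Fqm) :
    x ∈ U ↔ ∀ y ∈ dualPerp Fq U, Algebra.trace Fq Fqm (∑ j, x j * y j) = 0 := by
  have h : (dotTrace Fq Fqm k).orthogonal (dualPerp Fq U) = U :=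
    LinearMap.BilinForm.orthogonal_orthogonal (dotTrace_nondegenerate k)
      (fun x y h => (dotTrace_isSymm k).isRefl x y h) U
  conv_lhs => rw [← h, LinearMap.BilinForm.mem_orthogonal_iff]
  refine forall₂_congr fun y _ => ?_
  simp [dotTrace_apply, mul_comm]

/-- The rank of the block of a codeword is `m` minus the weight of the point `⟨v⟩`: the space of
entries is, for the trace form of `Fqm`, the orthogonal of `{a | a • v ∈ U}`. -/
lemma rk_add_finrank_inf_lineFq {k N : ℕ} (U : Submodule Fq (Fin k → Fqm))
    (g : Fin k → Fin N → Fqm)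
    (hcols : Submodule.span Fq (Set.range fun j : Fin N => fun r : Fin k => g r j)
      = dualPerp Fq U) {v : Fin k → Fqm} (hv : v ≠ 0) :
    rk Fq (fun j : Fin N => ∑ r, v r * g r j) + finrank Fq ↥(U ⊓ lineFq Fq v)
      = finrank Fq Fqm := by
  set L : (Fin k → Fqm) →ₗ[Fq] Fqm :=
    (Fintype.linearCombination Fqm v).restrictScalars Fq with hL
  have hLa : ∀ y, L y = ∑ r, v r * y r := fun y => by
    simp [hL, Fintype.linearCombination_apply, mul_comm]
  have hW : Submodule.span Fq (Set.range fun j : Fin N => ∑ r, v r * g r j)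
      = (dualPerp Fq U).map L := by
    rw [← hcols, Submodule.map_span, ← Set.range_comp]
    congr 2
    funext j
    simp [hLa]
  have horth : (Algebra.traceForm Fq Fqm).orthogonal ((dualPerp Fq U).map L)
      = U.comap ((LinearMap.toSpanSingleton Fqm (Fin k → Fqm) v).restrictScalars Fq) := by
    ext a
    rw [Submodule.mem_comap, mem_iff_forall_dualPerp, LinearMap.BilinForm.mem_orthogonal_iff]
    simp only [Submodule.mem_map, forall_exists_index, and_imp, forall_apply_eq_imp_iff₂]
    refine forall₂_congr fun y _ => ?_
    rw [Algebra.traceForm_apply, hLa, Finset.sum_mul]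
    simp [mul_comm, mul_left_comm]
  rw [rk, hW, finrank_inf_lineFq U hv, ← horth,
    LinearMap.BilinForm.finrank_orthogonal (traceForm_nondegenerate Fq Fqm)]
  exact Nat.add_sub_cancel' (Submodule.finrank_le _)

end Duality

/-- Lowering the rank of one block from `m` to `m - 1` lowers the Hamming weight by `q^(N-m)`. -/
lemma block_weight_succ {q N m : ℕ} (hq : 2 ≤ q) (hm : 1 ≤ m) (hN : m ≤ N) :
    (q ^ N - q ^ (N - m + 1)) / (q - 1) + q ^ (N - m) = (q ^ N - q ^ (N - m)) / (q - 1) := by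
  have h1 : q ^ (N - m + 1) ≤ q ^ N := Nat.pow_le_pow_right (by omega) (by omega)
  have h2 : q ^ (N - m + 1) = (q - 1) * q ^ (N - m) + q ^ (N - m) := by
    obtain ⟨p, rfl⟩ : ∃ p, q = p + 1 := ⟨q - 1, by omega⟩
    rw [Nat.add_sub_cancel]
    ring
  have h3 : q ^ N - q ^ (N - m) = (q ^ N - q ^ (N - m + 1)) + (q - 1) * q ^ (N - m) := by
    omega
  rw [h3, Nat.add_mul_div_left _ _ (by omega)]

/-- The set of nonzero Hamming weights of the Hamming-metric code
associated with the geometric dual code of Construction `(U₁,…,U_t)` equals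
`{δ_max} ∪ {w₁,…,w_t}`, and has exactly `|{n₁,…,n_t}| + 1` elements. -/
theorem hamming_weights_of_construction
    {Fq Fqm : Type} [Field Fq] [Fintype Fq] [Field Fqm] [Fintype Fqm] [Algebra Fq Fqm]
    {q m k t : ℕ} (hq : Fintype.card Fq = q) (hm : Module.finrank Fq Fqm = m)
    (hm2 : 2 ≤ m) (hk : 2 ≤ k) (ht : 1 ≤ t)
    {n : Fin t → ℕ} (hmono : ∀ i j : Fin t, i ≤ j → n j ≤ n i) (hn : ∀ i, 1 ≤ n i)
    (U : Fin t → Submodule Fq (Fin k → Fqm))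
    (hdim : ∀ i, Module.finrank Fq ↥(U i) = n i)
    (hscat : ∀ i, Scattered Fq (U i))
    (hdisj : ∀ i j : Fin t, i ≠ j → ∀ v : Fin k → Fqm, v ≠ 0 →
      U i ⊓ lineFq Fq v = ⊥ ∨ U j ⊓ lineFq Fq v = ⊥)
    (hnotcover : ∃ v : Fin k → Fqm, v ≠ 0 ∧ ∀ i, U i ⊓ lineFq Fq v = ⊥)
    (hspan : Submodule.span Fqm (⋃ i, (U i : Set (Fin k → Fqm))) = ⊤)
    (C : Submodule Fqm ((i : Fin t) → Fin (m * k - n i) → Fqm))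
    (G : Fin k → (i : Fin t) → Fin (m * k - n i) → Fqm)
    (hG : IsGenMatrix C G) (hnd : Nondeg Fq G)
    (hcols : ∀ i, Submodule.span Fq
        (Set.range fun j : Fin (m * k - n i) => fun rr : Fin k => G rr i j)
      = dualPerp Fq (U i)) :
    ({x : ℕ | ∃ v : Fin k → Fqm, v ≠ 0 ∧
        x = ∑ i, (q ^ (m * k - n i)
          - q ^ (m * k - n i - rk Fq (fun j : Fin (m * k - n i) => ∑ rr, v rr * G rr i j)))
            / (q - 1)}
      = {∑ i, (q ^ (m * k - n i) - q ^ (m * k - n i - m)) / (q - 1)}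
        ∪ {x : ℕ | ∃ jj : Fin t,
            x = (q ^ (m * k - n jj) - q ^ (m * k - n jj - m + 1)) / (q - 1)
              + ∑ i ∈ Finset.univ.erase jj,
                  (q ^ (m * k - n i) - q ^ (m * k - n i - m)) / (q - 1)})
    ∧ ({x : ℕ | ∃ v : Fin k → Fqm, v ≠ 0 ∧
        x = ∑ i, (q ^ (m * k - n i)
          - q ^ (m * k - n i - rk Fq (fun j : Fin (m * k - n i) => ∑ rr, v rr * G rr i j)))
            / (q - 1)}).ncard = (Finset.univ.image n).card + 1 := by
  classical
  have hq2 : 2 ≤ q := hq ▸ Fintype.one_lt_card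
  have hrk : ∀ v : Fin k → Fqm, v ≠ 0 → ∀ i,
      rk Fq (fun j : Fin (m * k - n i) => ∑ rr, v rr * G rr i j)
        + finrank Fq ↥(U i ⊓ lineFq Fq v) = m := fun v hv i =>
    (rk_add_finrank_inf_lineFq (U i) (fun r j => G r i j) (hcols i) hv).trans hm
  -- A point outside all linear sets has rank `m` in every block, which bounds `m` by the length.
  have hle : ∀ i, m ≤ m * k - n i := by
    obtain ⟨v, hv, hvU⟩ := hnotcover
    intro i
    have h := hrk v hv i
    rw [hvU i, finrank_bot, add_zero] at h
    calc m = _ := h.symm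
      _ ≤ Fintype.card (Fin (m * k - n i)) := finrank_range_le_card _
      _ = _ := Fintype.card_fin _
  set δ := ∑ i, (q ^ (m * k - n i) - q ^ (m * k - n i - m)) / (q - 1) with hδ
  set w : Fin t → ℕ := fun jj => (q ^ (m * k - n jj) - q ^ (m * k - n jj - m + 1)) / (q - 1)
    + ∑ i ∈ Finset.univ.erase jj, (q ^ (m * k - n i) - q ^ (m * k - n i - m)) / (q - 1) with hw
  have hwδ : ∀ j, w j + q ^ (m * k - n j - m) = δ := fun j => by
    rw [hδ, ← Finset.add_sum_erase _ _ (Finset.mem_univ j),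
      ← block_weight_succ hq2 (by omega) (hle j), hw]
    ring
  have hwt0 : ∀ v : Fin k → Fqm, v ≠ 0 → (∀ i, U i ⊓ lineFq Fq v = ⊥) →
      ∑ i, (q ^ (m * k - n i)
          - q ^ (m * k - n i - rk Fq (fun j : Fin (m * k - n i) => ∑ rr, v rr * G rr i j)))
            / (q - 1) = δ := fun v hv h0 => by
    refine Finset.sum_congr rfl fun i _ => ?_
    have h := hrk v hv i
    rw [h0 i, finrank_bot, add_zero] at h
    rw [h]
  have hwt1 : ∀ v : Fin k → Fqm, v ≠ 0 → ∀ j, U j ⊓ lineFq Fq v ≠ ⊥ →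
      ∑ i, (q ^ (m * k - n i)
          - q ^ (m * k - n i - rk Fq (fun j : Fin (m * k - n i) => ∑ rr, v rr * G rr i j)))
            / (q - 1) = w j := fun v hv j hj => by
    rw [← Finset.add_sum_erase _ _ (Finset.mem_univ j)]
    congr 1
    · have h := hrk v hv j
      have h1 := hscat j v hv
      have h2 : finrank Fq ↥(U j ⊓ lineFq Fq v) ≠ 0 := fun h => hj (Submodule.finrank_eq_zero.1 h)
      have h3 := hle j
      congr 3
      omega
    · refine Finset.sum_congr rfl fun i hi => ?_
      have h := hrk v hv i
      rw [(hdisj i j (Finset.ne_of_mem_erase hi) v hv).resolve_right hj, finrank_bot,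
        add_zero] at h
      rw [h]
  have hset : ({x : ℕ | ∃ v : Fin k → Fqm, v ≠ 0 ∧
        x = ∑ i, (q ^ (m * k - n i)
          - q ^ (m * k - n i - rk Fq (fun j : Fin (m * k - n i) => ∑ rr, v rr * G rr i j)))
            / (q - 1)} : Set ℕ) = {δ} ∪ {x : ℕ | ∃ jj : Fin t, x = w jj} := by
    ext x
    simp only [Set.mem_ofPred_eq, Set.mem_union, Set.mem_singleton_iff]
    constructor
    · rintro ⟨v, hv, rfl⟩
      by_cases h0 : ∀ i, U i ⊓ lineFq Fq v = ⊥
      · exact Or.inl (hwt0 v hv h0)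
      · push Not at h0
        obtain ⟨j, hj⟩ := h0
        exact Or.inr ⟨j, hwt1 v hv j hj⟩
    · rintro (rfl | ⟨j, rfl⟩)
      · obtain ⟨v, hv, h0⟩ := hnotcover
        exact ⟨v, hv, (hwt0 v hv h0).symm⟩
      · have hUj : U j ≠ ⊥ := fun h => by
          have h1 := hdim j
          have h2 := hn j
          rw [h, finrank_bot] at h1
          omega
        obtain ⟨u, hu, hu0⟩ := Submodule.exists_mem_ne_zero_of_ne_bot hUj
        refine ⟨u, hu0, (hwt1 u hu0 j fun h => hu0 ?_).symm⟩
        have : u ∈ U j ⊓ lineFq Fq u := ⟨hu, Submodule.mem_span_singleton_self u⟩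
        rwa [h, Submodule.mem_bot] at this
  refine ⟨hset, ?_⟩
  -- The weight `w j` is the value at `n j` of `a ↦ δ - q^(mk - a - m)`, injective on the `n j`.
  have hfin : ({δ} ∪ {x : ℕ | ∃ jj : Fin t, x = w jj} : Set ℕ)
      = ↑(insert δ ((Finset.univ.image n).image fun a => δ - q ^ (m * k - a - m))) := by
    ext x
    have : ∀ j, δ - q ^ (m * k - n j - m) = w j := fun j => by have := hwδ j; omega
    simp [this, eq_comm]
  have hpos : ∀ e, 0 < q ^ e := fun e => pow_pos (by omega) e
  rw [hset, hfin, Set.ncard_coe_finset, Finset.card_insert_of_notMem, Finset.card_image_of_injOn]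
  · intro a ha b hb hab
    simp only [Finset.coe_image, Finset.coe_univ, Set.image_univ, Set.mem_range] at ha hb
    obtain ⟨i, rfl⟩ := ha
    obtain ⟨j, rfl⟩ := hb
    have h1 := hwδ i
    have h2 := hwδ j
    have h3 := hle i
    have h4 := hle j
    have h5 : q ^ (m * k - n i - m) = q ^ (m * k - n j - m) := by
      simp only at hab
      omega
    have h6 := Nat.pow_right_injective hq2 h5
    omega
  · simp only [Finset.mem_image, Finset.mem_univ, true_and, exists_exists_eq_and, not_exists]
    intro j hj
    have h1 := hwδ j
    have h2 := hpos (m * k - n j - m)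
    omega
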